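/- Let X be a normed space and α ∈ (0,1). For any two points x, y in the open unit ball B(0,1) of X there exists a rectifiable curve γ ⊆ B(0,1) joining x and y such that ∫_γ d(z)^{α−1} |dz| ≤ (π/(α·2^α))·‖x−y‖^α, where d(z) = 1 − ‖z‖ is the distance to the boundary. -/

import Mathlib

open Set Filter Metric ENNReal NNReal

/-- `D* f x`: upper dilation of `f` at `x` (0 at isolated points). -/
noncomputable def Dstar {X Y : Type*} [MetricSpace X] [MetricSpace Y] (f : X → Y) (x : X) :
    ℝ≥0∞ :=
  Filter.limsup (fun y => edist (f x) (f y) / edist x y) (nhdsWithin x {x}ᶜ)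

/-- A curve parametrized on `[0,1]` joining `x` to `y`. -/
def IsCurveFrom {X : Type*} [MetricSpace X] (γ : ℝ → X) (x y : X) : Prop :=
  ContinuousOn γ (Set.Icc 0 1) ∧ γ 0 = x ∧ γ 1 = y

/-- Rectifiability of a curve parametrized on `[0,1]`. -/
def RectifiableCurve {X : Type*} [MetricSpace X] (γ : ℝ → X) : Prop :=
  eVariationOn γ (Set.Icc 0 1) ≠ ⊤

/-- `I` is the curve integral of `g` along `γ : [0,1] → X` (limit of Riemann sums with respect
to arclength). -/
def IsCurveIntegral {X : Type*} [MetricSpace X] (γ : ℝ → X) (g : X → ℝ) (I : ℝ) : Prop :=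
  ∀ ε > 0, ∃ δ > 0, ∀ n : ℕ, ∀ t s : ℕ → ℝ,
    0 < n → t 0 = 0 → t n = 1 →
    (∀ i < n, t i < t (i + 1)) →
    (∀ i < n, t (i + 1) - t i < δ) →
    (∀ i < n, s i ∈ Set.Icc (t i) (t (i + 1))) →
    |I - ∑ i ∈ Finset.range n,
        g (γ (s i)) * (eVariationOn γ (Set.Icc (t i) (t (i + 1)))).toReal| < ε

/-- The weighted distance `d_w`. -/
noncomputable def wDist {X : Type*} [MetricSpace X] (w : X → ℝ) (x y : X) : ℝ :=
  sInf {I | ∃ γ : ℝ → X, IsCurveFrom γ x y ∧ RectifiableCurve γ ∧ IsCurveIntegral γ w I}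

/-- The inner (length) distance `d₁`. -/
noncomputable def innerDist {Y : Type*} [MetricSpace Y] (u v : Y) : ℝ :=
  sInf {L | ∃ δ : ℝ → Y, IsCurveFrom δ u v ∧ eVariationOn δ (Set.Icc 0 1) = ENNReal.ofReal L}

/-- The class `RO^K_w(X,Y)` of regularly oscillating mappings. -/
def RegOsc {X Y : Type*} [MetricSpace X] [MetricSpace Y] (w : X → ℝ) (K : ℝ) (f : X → Y) :
    Prop :=
  (∀ x, Dstar f x ≠ ⊤) ∧
  (∀ x : X, ∀ r : ℝ, 0 < r → r < w x → Bornology.IsBounded (f '' Metric.ball x r)) ∧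
  (∀ x : X, ∀ r : ℝ, 0 < r → r < w x →
    Dstar f x ≤ ENNReal.ofReal ((K / r) * ⨆ y : Metric.ball x r, dist (f x) (f y)))

/-!
Pull `x` and `y` towards the centre by the factor `1 - h`, and join the two new points by a
segment. At arclength `s` along a radial piece the distance to the sphere is at least `s`, and on
the middle segment it is at least `h`, so the integral of `d ^ (α - 1)` is at most
`2 * h ^ α / α + h ^ (α - 1) * ‖x - y‖`. The choice `h = (1 - α) * ‖x - y‖ / 2` minimizes this bound
and leaves `2 * u ^ (-u) ≤ π` with `u = 1 - α` to be checked.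
-/

section RiemannSums

variable {E : Type*} [NormedAddCommGroup E] [NormedSpace ℝ E] [CompleteSpace E] {f : ℝ → E}

lemma norm_intervalIntegral_sub_smul_le {a b ε : ℝ} {c : E} (hab : a ≤ b)
    (hf : IntervalIntegrable f MeasureTheory.volume a b)
    (hfc : ∀ u ∈ Icc a b, ‖f u - c‖ ≤ ε) :
    ‖(∫ u in a..b, f u) - (b - a) • c‖ ≤ ε * (b - a) := by
  rw [← intervalIntegral.integral_const (a := a) (b := b) c,
    ← intervalIntegral.integral_sub hf intervalIntegrable_const, ← abs_of_nonneg (sub_nonneg.2 hab)]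
  refine intervalIntegral.norm_integral_le_of_norm_le_const fun u hu => hfc u ?_
  exact Ioc_subset_Icc_self (uIoc_of_le hab ▸ hu)

lemma exists_norm_intervalIntegral_sub_riemannSum_le {a b ε : ℝ}
    (hf : ContinuousOn f (Icc a b)) (hε : 0 < ε) :
    ∃ δ > 0, ∀ (n : ℕ) (t s : ℕ → ℝ), t 0 = a → t n = b → (∀ i < n, t i ≤ t (i + 1)) →
      (∀ i < n, t (i + 1) - t i < δ) → (∀ i < n, s i ∈ Icc (t i) (t (i + 1))) →
      ‖(∫ u in a..b, f u) - ∑ i ∈ Finset.range n, (t (i + 1) - t i) • f (s i)‖ ≤ ε * (b - a) := by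
  obtain ⟨δ, hδ, hfδ⟩ :=
    Metric.uniformContinuousOn_iff.1 (isCompact_Icc.uniformContinuousOn_of_continuous hf) ε hε
  refine ⟨δ, hδ, fun n t s ht0 htn hstep hmesh hs => ?_⟩
  have hmono : MonotoneOn t (Iic n) := monotoneOn_of_le_succ ordConnected_Iic
    fun i _ _ hi => hstep i hi
  have hsub : ∀ i < n, Icc (t i) (t (i + 1)) ⊆ Icc a b := fun i hi =>
    Icc_subset_Icc (ht0 ▸ hmono (Nat.zero_le n) hi.le (Nat.zero_le i))
      (htn ▸ hmono hi (le_refl n) hi)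
  have hint : ∀ i < n, IntervalIntegrable f MeasureTheory.volume (t i) (t (i + 1)) := fun i hi =>
    (hf.mono (uIcc_of_le (hstep i hi) ▸ hsub i hi)).intervalIntegrable
  have hosc : ∀ i < n, ∀ u ∈ Icc (t i) (t (i + 1)), ‖f u - f (s i)‖ ≤ ε := by
    intro i hi u hu
    rw [← dist_eq_norm]
    refine (hfδ u (hsub i hi hu) (s i) (hsub i hi (hs i hi)) ?_).le
    exact (Real.dist_le_of_mem_Icc hu (hs i hi)).trans_lt (hmesh i hi)
  calc ‖(∫ u in a..b, f u) - ∑ i ∈ Finset.range n, (t (i + 1) - t i) • f (s i)‖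
      = ‖∑ i ∈ Finset.range n,
          ((∫ u in t i..t (i + 1), f u) - (t (i + 1) - t i) • f (s i))‖ := by
        rw [Finset.sum_sub_distrib, intervalIntegral.sum_integral_adjacent_intervals hint, ht0, htn]
    _ ≤ ∑ i ∈ Finset.range n, ε * (t (i + 1) - t i) := norm_sum_le_of_le _ fun i hi =>
        have hi := Finset.mem_range.1 hi
        norm_intervalIntegral_sub_smul_le (hstep i hi) (hint i hi) (hosc i hi)
    _ = ε * (b - a) := by rw [← Finset.mul_sum, Finset.sum_range_sub, ht0, htn]

end RiemannSums

section ConstantSpeed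

variable {E : Type*} [PseudoEMetricSpace E] {γ : ℝ → E} {a b : ℝ} {l : ℝ≥0}

lemma edist_eq_ofReal_sub {s t : ℝ} (hst : s ≤ t) : edist s t = ENNReal.ofReal (t - s) := by
  rw [edist_comm, edist_dist, Real.dist_eq, abs_of_nonneg (sub_nonneg.2 hst)]

lemma hasConstantSpeedOnWith_congr {γ' : ℝ → E} {S : Set ℝ} (h : EqOn γ γ' S) :
    HasConstantSpeedOnWith γ S l ↔ HasConstantSpeedOnWith γ' S l := by
  have hvar (s t : ℝ) : eVariationOn γ (S ∩ Icc s t) = eVariationOn γ' (S ∩ Icc s t) :=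
    eVariationOn.congr (h.mono inter_subset_left)
  simp only [HasConstantSpeedOnWith, hvar]

lemma hasConstantSpeedOnWith_Icc_iff :
    HasConstantSpeedOnWith γ (Icc a b) l ↔
      ∀ s t, a ≤ s → s ≤ t → t ≤ b → eVariationOn γ (Icc s t) = ENNReal.ofReal (l * (t - s)) := by
  rw [hasConstantSpeedOnWith_iff_ordered]
  constructor
  · intro h s t has hst htb
    rw [← h ⟨has, hst.trans htb⟩ ⟨has.trans hst, htb⟩ hst,
      inter_eq_self_of_subset_right (Icc_subset_Icc has htb)]
  · intro h s hs t ht hst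
    rw [inter_eq_self_of_subset_right (Icc_subset_Icc hs.1 ht.2), h s t hs.1 hst ht.2]

lemma hasConstantSpeedOnWith_comp_mul (c : ℝ≥0) (hab : a ≤ b)
    (h : HasConstantSpeedOnWith γ (Icc (c * a) (c * b)) l) :
    HasConstantSpeedOnWith (fun t => γ (c * t)) (Icc a b) (l * c) := by
  intro s hs t ht
  have hmono : MonotoneOn (fun t : ℝ => c * t) (Icc a b) := fun _ _ _ _ hst =>
    mul_le_mul_of_nonneg_left hst c.2
  have himage : (fun t : ℝ => c * t) '' Icc a b = Icc (c * a) (c * b) :=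
    image_mul_left_Icc c.2 hab
  refine (eVariationOn.comp_inter_Icc_eq_of_monotoneOn γ _ hmono hs ht).trans ?_
  rw [himage, h (himage ▸ mem_image_of_mem _ hs) (himage ▸ mem_image_of_mem _ ht), NNReal.coe_mul,
    mul_assoc, ← mul_sub]

lemma hasConstantSpeedOnWith_comp_sub_const (c : ℝ) (h : HasConstantSpeedOnWith γ (Icc a b) l) :
    HasConstantSpeedOnWith (fun t => γ (t - c)) (Icc (a + c) (b + c)) l := by
  rw [hasConstantSpeedOnWith_Icc_iff] at h ⊢
  intro s t has hst htb
  refine (eVariationOn.comp_eq_of_monotoneOn γ (· - c) fun _ _ _ _ hst =>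
    sub_le_sub_right hst c).trans ?_
  rw [image_sub_const_Icc, h _ _ (by linarith) (by linarith) (by linarith),
    sub_sub_sub_cancel_right]

lemma hasConstantSpeedOnWith_comp_const_sub (c : ℝ) (h : HasConstantSpeedOnWith γ (Icc a b) l) :
    HasConstantSpeedOnWith (fun t => γ (c - t)) (Icc (c - b) (c - a)) l := by
  rw [hasConstantSpeedOnWith_Icc_iff] at h ⊢
  intro s t has hst htb
  refine (eVariationOn.comp_eq_of_antitoneOn γ (c - ·) fun _ _ _ _ hst =>
    sub_le_sub_left hst c).trans ?_
  rw [image_const_sub_Icc, h _ _ (by linarith) (by linarith) (by linarith),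
    _root_.sub_sub_sub_cancel_left]

lemma lipschitzOnWith_of_hasConstantSpeedOnWith {S : Set ℝ} (h : HasConstantSpeedOnWith γ S l) :
    LipschitzOnWith l γ S := by
  intro s hs t ht
  wlog hst : s ≤ t generalizing s t
  · rw [edist_comm, edist_comm s]
    exact this ht hs (le_of_not_ge hst)
  calc edist (γ s) (γ t) ≤ eVariationOn γ (S ∩ Icc s t) :=
        eVariationOn.edist_le γ ⟨hs, left_mem_Icc.2 hst⟩ ⟨ht, right_mem_Icc.2 hst⟩
    _ = l * edist s t := by
        rw [h hs ht, ENNReal.ofReal_mul l.coe_nonneg, ENNReal.ofReal_coe_nnreal,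
          edist_eq_ofReal_sub hst]

lemma hasUnitSpeedOn_of_edist_eq {S : Set ℝ} (h : ∀ s ∈ S, ∀ t ∈ S, edist (γ s) (γ t) = edist s t) :
    HasUnitSpeedOn γ S := by
  refine hasConstantSpeedOnWith_iff_ordered.2 fun s hs t ht hst => ?_
  have hlip : LipschitzOnWith 1 γ S := fun u hu v hv => by simp [h u hu v hv]
  rw [NNReal.coe_one, one_mul]
  apply le_antisymm
  · calc eVariationOn γ (S ∩ Icc s t) ≤ (1 : ℝ≥0) * eVariationOn id (S ∩ Icc s t) :=
          hlip.comp_eVariationOn_le inter_subset_left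
      _ = ENNReal.ofReal (t - s) := by rw [eVariationOn_id hs ht, ENNReal.coe_one, one_mul]
  · calc ENNReal.ofReal (t - s) = edist (γ s) (γ t) := by
          rw [h s hs t ht, edist_eq_ofReal_sub hst]
      _ ≤ eVariationOn γ (S ∩ Icc s t) :=
          eVariationOn.edist_le γ ⟨hs, left_mem_Icc.2 hst⟩ ⟨ht, right_mem_Icc.2 hst⟩

end ConstantSpeed

section JoinedWithCost

variable {X : Type*} [PseudoEMetricSpace X] {w : X → ℝ} {U : Set X} {x y z : X} {C D : ℝ}

/-- The points `x` and `y` are joined inside `U` by a rectifiable curve along which the weight `w`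
has curve integral at most `C`. The curve is parametrized by arclength on `[0, L]`, which turns the
curve integral into an ordinary one. -/
def JoinedWithCost (w : X → ℝ) (U : Set X) (x y : X) (C : ℝ) : Prop :=
  ∃ L ≥ 0, ∃ γ : ℝ → X, HasUnitSpeedOn γ (Icc 0 L) ∧ γ 0 = x ∧ γ L = y ∧ MapsTo γ (Icc 0 L) U ∧
    (∫ s in (0 : ℝ)..L, w (γ s)) ≤ C

namespace JoinedWithCost

lemma mono (h : JoinedWithCost w U x y C) (hCD : C ≤ D) : JoinedWithCost w U x y D := by
  obtain ⟨L, hL, γ, hγ, hx, hy, hU, hC⟩ := h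
  exact ⟨L, hL, γ, hγ, hx, hy, hU, hC.trans hCD⟩

lemma symm (h : JoinedWithCost w U x y C) : JoinedWithCost w U y x C := by
  obtain ⟨L, hL, γ, hγ, hx, hy, hU, hC⟩ := h
  refine ⟨L, hL, fun s => γ (L - s), ?_, by simpa, by simpa, fun s hs => hU ?_, ?_⟩
  · simpa [HasUnitSpeedOn] using hasConstantSpeedOnWith_comp_const_sub L hγ
  · exact ⟨sub_nonneg.2 hs.2, sub_le_self L hs.1⟩
  · simpa [intervalIntegral.integral_comp_sub_left (fun s => w (γ s)) L] using hC

lemma trans (hw : ContinuousOn w U) (hxy : JoinedWithCost w U x y C)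
    (hyz : JoinedWithCost w U y z D) : JoinedWithCost w U x z (C + D) := by
  obtain ⟨a, ha, γ₁, hγ₁, hx, hy₁, hU₁, hC⟩ := hxy
  obtain ⟨b, hb, γ₂, hγ₂, hy₂, hz, hU₂, hD⟩ := hyz
  let γ : ℝ → X := fun t => if t ≤ a then γ₁ t else γ₂ (t - a)
  have hleft : EqOn γ γ₁ (Icc 0 a) := fun t ht => if_pos ht.2
  have hright : EqOn γ (fun t => γ₂ (t - a)) (Icc a (b + a)) := by
    intro t ht
    rcases ht.1.eq_or_lt with rfl | hat
    · simp [γ, hy₁, hy₂]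
    · exact if_neg hat.not_ge
  have hspeed : HasUnitSpeedOn γ (Icc 0 (b + a)) := by
    refine HasUnitSpeedOn.Icc_Icc ((hasConstantSpeedOnWith_congr hleft).2 hγ₁)
      ((hasConstantSpeedOnWith_congr hright).2 ?_)
    simpa using hasConstantSpeedOnWith_comp_sub_const a hγ₂
  have hmaps : MapsTo γ (Icc 0 (b + a)) U := by
    intro t ht
    rcases le_total t a with hta | hat
    · exact hleft ⟨ht.1, hta⟩ ▸ hU₁ ⟨ht.1, hta⟩
    · exact hright ⟨hat, ht.2⟩ ▸ hU₂ ⟨sub_nonneg.2 hat, sub_le_iff_le_add.2 ht.2⟩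
  have hcont : ContinuousOn (fun t => w (γ t)) (Icc 0 (b + a)) :=
    hw.comp (lipschitzOnWith_of_hasConstantSpeedOnWith hspeed).continuousOn hmaps
  have hab : a ≤ b + a := le_add_of_nonneg_left hb
  have hint₁ : ∫ t in (0 : ℝ)..a, w (γ t) = ∫ t in (0 : ℝ)..a, w (γ₁ t) :=
    intervalIntegral.integral_congr fun t ht => congrArg w (hleft (uIcc_of_le ha ▸ ht))
  have hint₂ : ∫ t in a..b + a, w (γ t) = ∫ t in (0 : ℝ)..b, w (γ₂ t) := by
    rw [intervalIntegral.integral_congr fun t ht => congrArg w (hright (uIcc_of_le hab ▸ ht)),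
      intervalIntegral.integral_comp_sub_right (fun t => w (γ₂ t)), sub_self, add_sub_cancel_right]
  refine ⟨b + a, add_nonneg hb ha, γ, hspeed, (hleft (left_mem_Icc.2 ha)).trans hx, ?_, hmaps, ?_⟩
  · simpa [hz] using hright (right_mem_Icc.2 hab)
  · rw [← intervalIntegral.integral_add_adjacent_intervals (b := a)
      (hcont.mono (uIcc_of_le ha ▸ Icc_subset_Icc_right hab)).intervalIntegrable
      (hcont.mono (uIcc_of_le hab ▸ Icc_subset_Icc_left ha)).intervalIntegrable, hint₁, hint₂]
    exact add_le_add hC hD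

end JoinedWithCost

end JoinedWithCost

section CurveIntegral

variable {X : Type*} [MetricSpace X] {w : X → ℝ}

lemma isCurveIntegral_of_hasConstantSpeedOnWith {γ : ℝ → X} {l : ℝ≥0}
    (hγ : HasConstantSpeedOnWith γ (Icc 0 1) l) (hw : ContinuousOn (fun t => w (γ t)) (Icc 0 1)) :
    IsCurveIntegral γ w (l * ∫ t in (0 : ℝ)..1, w (γ t)) := by
  intro ε hε
  have hl : (0 : ℝ) < l + 1 := by positivity
  obtain ⟨δ, hδ, hsum⟩ := exists_norm_intervalIntegral_sub_riemannSum_le hw (div_pos hε hl)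
  refine ⟨δ, hδ, fun n t s _ ht0 htn hstep hmesh hs => ?_⟩
  have hmono : MonotoneOn t (Iic n) := monotoneOn_of_le_succ ordConnected_Iic
    fun i _ _ hi => (hstep i hi).le
  have hlength : ∀ i < n,
      (eVariationOn γ (Icc (t i) (t (i + 1)))).toReal = l * (t (i + 1) - t i) := by
    intro i hi
    rw [hasConstantSpeedOnWith_Icc_iff.1 hγ _ _ (ht0 ▸ hmono (Nat.zero_le n) hi.le (Nat.zero_le i))
      (hstep i hi).le (htn ▸ hmono hi (le_refl n) hi), ENNReal.toReal_ofReal]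
    exact mul_nonneg l.2 (sub_nonneg.2 (hstep i hi).le)
  have hfactor : ∑ i ∈ Finset.range n, w (γ (s i)) * (eVariationOn γ (Icc (t i) (t (i + 1)))).toReal
      = l * ∑ i ∈ Finset.range n, (t (i + 1) - t i) • w (γ (s i)) := by
    rw [Finset.mul_sum]
    refine Finset.sum_congr rfl fun i hi => ?_
    rw [hlength i (Finset.mem_range.1 hi), smul_eq_mul]
    ring
  rw [hfactor, ← mul_sub, abs_mul, NNReal.abs_eq]
  calc l * |(∫ t in (0 : ℝ)..1, w (γ t)) - ∑ i ∈ Finset.range n, (t (i + 1) - t i) • w (γ (s i))|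
      ≤ l * (ε / (l + 1) * (1 - 0)) := by
        gcongr
        exact hsum n t s ht0 htn (fun i hi => (hstep i hi).le) hmesh hs
    _ < ε := by
        rw [sub_zero, mul_one, mul_div_assoc', div_lt_iff₀ hl]
        linarith

lemma JoinedWithCost.exists_isCurveIntegral_le {U : Set X} {x y : X} {C : ℝ}
    (h : JoinedWithCost w U x y C) (hw : ContinuousOn w U) :
    ∃ γ : ℝ → X, ∃ I : ℝ, IsCurveFrom γ x y ∧ (∀ t ∈ Icc (0 : ℝ) 1, γ t ∈ U) ∧
      RectifiableCurve γ ∧ IsCurveIntegral γ w I ∧ I ≤ C := by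
  obtain ⟨L, hL, γ, hγ, hx, hy, hU, hC⟩ := h
  lift L to ℝ≥0 using hL
  have hspeed : HasConstantSpeedOnWith (fun t => γ (L * t)) (Icc 0 1) L := by
    have hscaled := hasConstantSpeedOnWith_comp_mul (γ := γ) (l := 1) L zero_le_one
      (by rwa [mul_zero, mul_one])
    rwa [one_mul] at hscaled
  have hcont : ContinuousOn (fun t => γ (L * t)) (Icc 0 1) :=
    (lipschitzOnWith_of_hasConstantSpeedOnWith hspeed).continuousOn
  have hmem : ∀ t ∈ Icc (0 : ℝ) 1, γ (L * t) ∈ U := fun t ht =>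
    hU ⟨mul_nonneg L.2 ht.1, mul_le_of_le_one_right L.2 ht.2⟩
  refine ⟨fun t => γ (L * t), _, ⟨hcont, by simpa, by simpa⟩, hmem, ?_,
    isCurveIntegral_of_hasConstantSpeedOnWith hspeed (hw.comp hcont hmem), ?_⟩
  · rw [RectifiableCurve, hasConstantSpeedOnWith_Icc_iff.1 hspeed 0 1 le_rfl zero_le_one le_rfl]
    exact ENNReal.ofReal_ne_top
  · simpa [intervalIntegral.mul_integral_comp_mul_left (f := fun s => w (γ s))] using hC

end CurveIntegral

section Segment

variable {X : Type*} [NormedAddCommGroup X] [NormedSpace ℝ X] {w : X → ℝ} {U : Set X} {p q : X}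

lemma exists_hasUnitSpeedOn_mapsTo_segment (p q : X) :
    ∃ γ : ℝ → X, HasUnitSpeedOn γ (Icc 0 (dist p q)) ∧ γ 0 = p ∧ γ (dist p q) = q ∧
      MapsTo γ (Icc 0 (dist p q)) (segment ℝ p q) ∧ ∀ s ∈ Icc 0 (dist p q), dist p (γ s) = s := by
  let γ : ℝ → X := fun s => AffineMap.lineMap p q (s / dist p q)
  have hγ0 : γ 0 = p := by simp [γ]
  have hγq : γ (dist p q) = q := by
    rcases eq_or_ne p q with rfl | hpq
    · simp [γ]
    · simp [γ, div_self (dist_ne_zero.2 hpq)]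
  have hdist : ∀ s ∈ Icc 0 (dist p q), ∀ t ∈ Icc 0 (dist p q), dist (γ s) (γ t) = dist s t := by
    intro s hs t ht
    rcases (dist_nonneg (x := p) (y := q)).eq_or_lt with hpq | hpq
    · rw [← hpq, Icc_self] at hs ht
      simp [mem_singleton_iff.1 hs, mem_singleton_iff.1 ht]
    · rw [dist_lineMap_lineMap, Real.dist_eq, ← _root_.sub_div, abs_div, abs_of_pos hpq,
        div_mul_cancel₀ _ hpq.ne', Real.dist_eq]
  refine ⟨γ, hasUnitSpeedOn_of_edist_eq fun s hs t ht => ?_, hγ0, hγq, fun s hs => ?_,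
    fun s hs => ?_⟩
  · rw [edist_dist, edist_dist, hdist s hs t ht]
  · rw [segment_eq_image_lineMap]
    exact mem_image_of_mem _ ⟨div_nonneg hs.1 dist_nonneg, div_le_one_of_le₀ hs.2 dist_nonneg⟩
  · rw [← hγ0, hdist 0 (left_mem_Icc.2 dist_nonneg) s hs, dist_zero_left, Real.norm_of_nonneg hs.1]

lemma joinedWithCost_segment {φ : ℝ → ℝ} (hU : segment ℝ p q ⊆ U) (hw : ContinuousOn w U)
    (hφ : IntervalIntegrable φ MeasureTheory.volume 0 (dist p q))
    (hle : ∀ z ∈ segment ℝ p q, z ≠ p → w z ≤ φ (dist p z)) :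
    JoinedWithCost w U p q (∫ s in (0 : ℝ)..dist p q, φ s) := by
  obtain ⟨γ, hspeed, hp, hq, hseg, hdist⟩ := exists_hasUnitSpeedOn_mapsTo_segment p q
  have hcont : ContinuousOn (fun s => w (γ s)) (Icc 0 (dist p q)) :=
    hw.comp (lipschitzOnWith_of_hasConstantSpeedOnWith hspeed).continuousOn (hseg.mono_right hU)
  refine ⟨dist p q, dist_nonneg, γ, hspeed, hp, hq, hseg.mono_right hU, ?_⟩
  refine intervalIntegral.integral_mono_on_of_le_Ioo dist_nonneg
    (hcont.mono (uIcc_of_le dist_nonneg).subset).intervalIntegrable hφ fun s hs => ?_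
  have hs' : s ∈ Icc 0 (dist p q) := Ioo_subset_Icc_self hs
  have hne : γ s ≠ p := dist_pos.1 ((hdist s hs').symm ▸ hs.1) |>.symm
  simpa only [hdist s hs'] using hle (γ s) (hseg hs') hne

lemma joinedWithCost_segment_of_le {M : ℝ} (hU : segment ℝ p q ⊆ U) (hw : ContinuousOn w U)
    (hle : ∀ z ∈ segment ℝ p q, w z ≤ M) : JoinedWithCost w U p q (M * dist p q) := by
  have h := joinedWithCost_segment hU hw (intervalIntegrable_const (c := M)) fun z hz _ => hle z hz
  rwa [intervalIntegral.integral_const, sub_zero, smul_eq_mul, mul_comm] at h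

end Segment

section UnitBall

lemma continuousOn_one_sub_norm_rpow {X : Type*} [SeminormedAddCommGroup X] (β : ℝ) :
    ContinuousOn (fun z : X => (1 - ‖z‖) ^ β) (ball 0 1) :=
  (continuous_const.sub continuous_norm).continuousOn.rpow_const fun _ hz =>
    Or.inl (sub_pos.2 (mem_ball_zero_iff.1 hz)).ne'

variable {X : Type*} [NormedAddCommGroup X] [NormedSpace ℝ X] {x y : X} {α h : ℝ}

lemma joinedWithCost_radial (hα : α ∈ Ioc (0 : ℝ) 1) (hh : h ∈ Icc (0 : ℝ) 1)
    (hx : x ∈ ball (0 : X) 1) :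
    JoinedWithCost (fun z => (1 - ‖z‖) ^ (α - 1)) (ball 0 1) x ((1 - h) • x) (h ^ α / α) := by
  have hα0 : 0 < α := hα.1
  have hx1 : ‖x‖ < 1 := mem_ball_zero_iff.1 hx
  have hradius : segment ℝ x ((1 - h) • x) ⊆ segment ℝ x 0 :=
    (convex_segment x 0).segment_subset (left_mem_segment ℝ x 0)
      ⟨1 - h, h, sub_nonneg.2 hh.2, hh.1, sub_add_cancel 1 h, by simp⟩
  have hball : segment ℝ x ((1 - h) • x) ⊆ ball 0 1 :=
    hradius.trans ((convex_ball 0 1).segment_subset hx (mem_ball_self one_pos))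
  have hweight : ∀ z ∈ segment ℝ x ((1 - h) • x), z ≠ x →
      (1 - ‖z‖) ^ (α - 1) ≤ dist x z ^ (α - 1) := by
    intro z hz hzx
    have hsum : dist x z + ‖z‖ = ‖x‖ := by simpa using dist_add_dist_of_mem_segment (hradius hz)
    exact Real.rpow_le_rpow_of_nonpos (dist_pos.2 hzx.symm) (by linarith) (by linarith [hα.2])
  have hlength : dist x ((1 - h) • x) = h * ‖x‖ := by
    rw [dist_eq_norm, sub_smul, one_smul, _root_.sub_sub_cancel, norm_smul,
      Real.norm_of_nonneg hh.1]
  refine (joinedWithCost_segment hball (continuousOn_one_sub_norm_rpow _)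
    (intervalIntegral.intervalIntegrable_rpow' (by linarith)) hweight).mono ?_
  calc ∫ s in (0 : ℝ)..dist x ((1 - h) • x), s ^ (α - 1) = (h * ‖x‖) ^ α / α := by
        rw [hlength, integral_rpow (Or.inl (by linarith)), sub_add_cancel, Real.zero_rpow hα0.ne',
          sub_zero]
    _ ≤ h ^ α / α := by
        have := hh.1
        gcongr
        exact mul_le_of_le_one_right hh.1 hx1.le

lemma joinedWithCost_smul_smul (hα : α ≤ 1) (hh : h ∈ Ioc (0 : ℝ) 1)
    (hx : x ∈ ball (0 : X) 1) (hy : y ∈ ball (0 : X) 1) :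
    JoinedWithCost (fun z => (1 - ‖z‖) ^ (α - 1)) (ball 0 1) ((1 - h) • x) ((1 - h) • y)
      (h ^ (α - 1) * ‖x - y‖) := by
  have hh0 : 0 < h := hh.1
  have h1 : 0 ≤ 1 - h := sub_nonneg.2 hh.2
  have hmem : ∀ z ∈ ball (0 : X) 1, (1 - h) • z ∈ closedBall (0 : X) (1 - h) := by
    intro z hz
    rw [mem_closedBall_zero_iff, norm_smul, Real.norm_of_nonneg h1]
    exact mul_le_of_le_one_right h1 (mem_ball_zero_iff.1 hz).le
  have hsmall : segment ℝ ((1 - h) • x) ((1 - h) • y) ⊆ closedBall 0 (1 - h) :=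
    (convex_closedBall 0 (1 - h)).segment_subset (hmem x hx) (hmem y hy)
  have hweight : ∀ z ∈ segment ℝ ((1 - h) • x) ((1 - h) • y),
      (1 - ‖z‖) ^ (α - 1) ≤ h ^ (α - 1) := by
    intro z hz
    have hz : ‖z‖ ≤ 1 - h := mem_closedBall_zero_iff.1 (hsmall hz)
    exact Real.rpow_le_rpow_of_nonpos hh0 (by linarith) (by linarith)
  refine (joinedWithCost_segment_of_le
    (hsmall.trans (closedBall_subset_ball (sub_lt_self 1 hh0)))
    (continuousOn_one_sub_norm_rpow _) hweight).mono ?_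
  rw [dist_eq_norm, ← smul_sub, norm_smul, Real.norm_of_nonneg h1]
  gcongr
  exact mul_le_of_le_one_left (norm_nonneg _) (sub_le_self 1 hh0.le)

lemma joinedWithCost_unitBall_of_depth (hα : α ∈ Ioc (0 : ℝ) 1) (hh : h ∈ Ioc (0 : ℝ) 1)
    (hx : x ∈ ball (0 : X) 1) (hy : y ∈ ball (0 : X) 1) :
    JoinedWithCost (fun z => (1 - ‖z‖) ^ (α - 1)) (ball 0 1) x y
      (h ^ α / α + h ^ (α - 1) * ‖x - y‖ + h ^ α / α) := by
  have hw := continuousOn_one_sub_norm_rpow (X := X) (α - 1)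
  have hradial {z : X} (hz : z ∈ ball (0 : X) 1) :=
    joinedWithCost_radial hα (Ioc_subset_Icc_self hh) hz
  exact ((hradial hx).trans hw (joinedWithCost_smul_smul hα.2 hh hx hy)).trans hw (hradial hy).symm

lemma depth_cost_eq (hα : α ∈ Ioo (0 : ℝ) 1) {d : ℝ} (hd : 0 < d) (hh : h = (1 - α) * (d / 2)) :
    h ^ α / α + h ^ (α - 1) * d + h ^ α / α = 2 * (1 - α) ^ (α - 1) / (α * 2 ^ α) * d ^ α := by
  have hα0 : 0 < α := hα.1
  have hu : 0 < 1 - α := sub_pos.2 hα.2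
  have hpow {r : ℝ} (hr : 0 < r) : r ^ α = r ^ (α - 1) * r := by
    rw [← Real.rpow_add_one hr.ne', sub_add_cancel]
  have hh0 : 0 < h := by rw [hh]; positivity
  calc h ^ α / α + h ^ (α - 1) * d + h ^ α / α = h ^ (α - 1) * d / α := by
        rw [hpow hh0, hh]
        field_simp
        ring
    _ = 2 * (1 - α) ^ (α - 1) / (α * 2 ^ α) * d ^ α := by
        rw [hh, Real.mul_rpow hu.le (by positivity), Real.div_rpow hd.le two_pos.le, hpow hd,
          hpow two_pos]
        field_simp

lemma joinedWithCost_unitBall (hα : α ∈ Ioo (0 : ℝ) 1)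
    (hx : x ∈ ball (0 : X) 1) (hy : y ∈ ball (0 : X) 1) :
    JoinedWithCost (fun z => (1 - ‖z‖) ^ (α - 1)) (ball 0 1) x y
      (2 * (1 - α) ^ (α - 1) / (α * 2 ^ α) * ‖x - y‖ ^ α) := by
  rcases eq_or_ne x y with rfl | hxy
  · simpa [Real.zero_rpow hα.1.ne'] using
      joinedWithCost_segment_of_le (p := x) (q := x) (M := (1 - ‖x‖) ^ (α - 1)) (by simpa using hx)
        (continuousOn_one_sub_norm_rpow (α - 1)) (by simp)
  · have hd : 0 < ‖x - y‖ := norm_sub_pos_iff.2 hxy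
    have hd2 : ‖x - y‖ ≤ 2 := by
      linarith [norm_sub_le x y, mem_ball_zero_iff.1 hx, mem_ball_zero_iff.1 hy]
    have hdepth : (1 - α) * (‖x - y‖ / 2) ∈ Ioc (0 : ℝ) 1 :=
      ⟨mul_pos (sub_pos.2 hα.2) (half_pos hd),
        mul_le_one₀ (sub_le_self 1 hα.1.le) (half_pos hd).le (by linarith)⟩
    rw [← depth_cost_eq hα hd rfl]
    exact joinedWithCost_unitBall_of_depth (Ioo_subset_Ioc_self hα) hdepth hx hy

end UnitBall

lemma rpow_neg_self_le_exp_exp_neg_one {u : ℝ} (hu : 0 < u) :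
    u ^ (-u) ≤ Real.exp (Real.exp (-1)) := by
  rw [Real.rpow_def_of_pos hu, Real.exp_le_exp]
  calc Real.log u * -u = u * (-1 - Real.log u + 1) := by ring
    _ ≤ u * Real.exp (-1 - Real.log u) := by
        gcongr
        exact Real.add_one_le_exp _
    _ = Real.exp (-1) := by rw [Real.exp_sub, Real.exp_log hu, mul_div_cancel₀ _ hu.ne']

lemma two_mul_rpow_neg_self_le_pi {u : ℝ} (hu : 0 < u) : 2 * u ^ (-u) ≤ Real.pi := by
  have hexp : Real.exp (2 / 5) ≤ 3 / 2 := by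
    refine le_of_pow_le_pow_left₀ (n := 5) (by norm_num) (by norm_num) ?_
    calc Real.exp (2 / 5) ^ 5 = Real.exp 1 ^ 2 := by
          rw [← Real.exp_nat_mul, ← Real.exp_nat_mul]
          norm_num
      _ ≤ 2.7182818286 ^ 2 := by
          gcongr
          exact Real.exp_one_lt_d9.le
      _ ≤ (3 / 2) ^ 5 := by norm_num
  calc 2 * u ^ (-u) ≤ 2 * Real.exp (2 / 5) := by
        gcongr
        refine (rpow_neg_self_le_exp_exp_neg_one hu).trans (Real.exp_le_exp.2 ?_)
        linarith [Real.exp_neg_one_lt_d9]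
    _ ≤ 3 := by linarith
    _ ≤ Real.pi := Real.pi_gt_three.le

theorem unit_ball_curve_condition {X : Type*} [NormedAddCommGroup X] [NormedSpace ℝ X]
    (α : ℝ) (hα : α ∈ Set.Ioo (0:ℝ) 1)
    (x y : X) (hx : x ∈ Metric.ball (0:X) 1) (hy : y ∈ Metric.ball (0:X) 1) :
    ∃ γ : ℝ → X, ∃ I : ℝ, IsCurveFrom γ x y ∧
      (∀ t ∈ Set.Icc (0:ℝ) 1, γ t ∈ Metric.ball (0:X) 1) ∧
      RectifiableCurve γ ∧
      IsCurveIntegral γ (fun z => (1 - ‖z‖) ^ (α - 1)) I ∧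
      I ≤ (Real.pi / (α * 2 ^ α)) * ‖x - y‖ ^ α := by
  have hconst : 2 * (1 - α) ^ (α - 1) ≤ Real.pi := by
    simpa using two_mul_rpow_neg_self_le_pi (sub_pos.2 hα.2)
  have hα0 : 0 < α := hα.1
  refine ((joinedWithCost_unitBall hα hx hy).mono ?_).exists_isCurveIntegral_le
    (continuousOn_one_sub_norm_rpow (α - 1))
  gcongr
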